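/- Every root r of L satisfies ht(r) ≥ 1, and ht(r) = 1 if and only if r is a unit multiple of one of the 26 roots of the diagram D. Equivalently, the mirrors of the 26 reflections of D are exactly the mirrors closest to the Weyl vector ρ̄. -/

import Mathlib

noncomputable section

open ComplexConjugate

namespace Bimonster

/-- The primitive cube root of unity `ω = e^{2πi/3}`. -/
def ω : ℂ := Complex.exp (2 * (Real.pi : ℂ) * Complex.I / 3)

/-- `θ = ω - ω̄ = √-3`. -/
def θ : ℂ := ω - conj ω

/-- `ξ = e^{-πi/6}`. -/
def ξ : ℂ := Complex.exp (-((Real.pi : ℂ) * Complex.I) / 6)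

/-- Membership in the ring of Eisenstein integers `ℰ = ℤ[ω] ⊆ ℂ`. -/
def EisP (z : ℂ) : Prop := ∃ a b : ℤ, z = (a : ℂ) + (b : ℂ) * ω

/-- The units of the ring of Eisenstein integers. -/
def EisUnit (z : ℂ) : Prop :=
  z = 1 ∨ z = -1 ∨ z = ω ∨ z = -ω ∨ z = ω ^ 2 ∨ z = -ω ^ 2

/-- The underlying 14-dimensional complex vector space of `L = 3E₈ ⊕ H`. -/
abbrev V : Type := Fin 14 → ℂ

/-- The Hermitian form of `L = 3E₈ ⊕ H`: negative definite standard form on the twelve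
`E₈`-coordinates, and the hyperbolic cell with Gram matrix `[[0, θ̄], [θ, 0]]` on the
last two coordinates.  It is conjugate-linear in the first variable. -/
def herm (u v : V) : ℂ :=
  -(∑ i : Fin 12, conj (u (Fin.castLE (by norm_num) i)) * v (Fin.castLE (by norm_num) i)) +
    conj (u 12) * conj θ * v 13 + conj (u 13) * θ * v 12

/-- First generator of the ternary tetracode `𝒞₄ ⊆ 𝔽₃⁴`. -/
def tet1 : Fin 4 → ℤ := ![1, 1, -1, 0]

/-- Second generator of the ternary tetracode `𝒞₄ ⊆ 𝔽₃⁴`. -/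
def tet2 : Fin 4 → ℤ := ![0, 1, 1, 1]

/-- The complex `E₈` lattice: vectors of `ℰ⁴` whose reduction mod `θ` lies in the
ternary tetracode. -/
def inE8 (w : Fin 4 → ℂ) : Prop :=
  (∀ i, EisP (w i)) ∧
    ∃ s t : ℤ, ∀ i : Fin 4, ∃ a b : ℤ,
      w i - ((tet1 i * s + tet2 i * t : ℤ) : ℂ) = θ * ((a : ℂ) + (b : ℂ) * ω)

/-- The lattice `L = 3E₈ ⊕ H` as a subset of `ℂ¹⁴`. -/
def Lset : Set V :=
  {v | (∀ k : Fin 3,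
      inE8 fun i : Fin 4 =>
        v ⟨4 * (k : ℕ) + (i : ℕ), by have hk := k.isLt; have hi := i.isLt; omega⟩) ∧
    EisP (v 12) ∧ EisP (v 13)}

/-- A root of `L`: a primitive lattice vector of norm `-3`. -/
def IsRoot (r : V) : Prop :=
  r ∈ Lset ∧ herm r r = -3 ∧
    ∀ α : ℂ, EisP α → ∀ y ∈ Lset, r = α • y → EisUnit α

/-- The `μ`-reflection in a vector `r`: `v ↦ v − (1−μ)·r·⟨r,v⟩/|r|²`. -/
def reflMap (μ : ℂ) (r v : V) : V := v - ((1 - μ) * herm r v / herm r r) • r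

/-- The automorphism group of the lattice `L`: invertible `ℂ`-linear maps preserving
the lattice and the Hermitian form. -/
def AutL : Subgroup (V ≃ₗ[ℂ] V) where
  carrier := {g | (∀ v : V, v ∈ Lset ↔ g v ∈ Lset) ∧ ∀ u v : V, herm (g u) (g v) = herm u v}
  one_mem' := ⟨fun _ => Iff.rfl, fun _ _ => rfl⟩
  mul_mem' := by
    rintro f g ⟨hf1, hf2⟩ ⟨hg1, hg2⟩
    refine ⟨fun v => ?_, fun u v => ?_⟩
    · exact (hg1 v).trans (hf1 (g v))
    · exact (hf2 (g u) (g v)).trans (hg2 u v)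
  inv_mem' := by
    rintro g ⟨hg1, hg2⟩
    refine ⟨fun v => ?_, fun u v => ?_⟩
    · have h := hg1 (g.symm v)
      have hv : g (g.symm v) = v := g.apply_symm_apply v
      rw [hv] at h
      exact h.symm
    · have h := hg2 (g.symm u) (g.symm v)
      have hu : g (g.symm u) = u := g.apply_symm_apply u
      have hv : g (g.symm v) = v := g.apply_symm_apply v
      rw [hu, hv] at h
      exact h.symm

/-- The set of elements of `Aut(L)` acting as the `ω`-reflection in some root
belonging to `S`. -/
def ReflAutos (S : Set V) : Set (V ≃ₗ[ℂ] V) :=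
  {g | g ∈ AutL ∧ ∃ r ∈ S, ∀ v, g v = reflMap ω r v}

/-- The reflection group `R(L)`: the subgroup of `Aut(L)` generated by the
`ω`-reflections in all roots of `L`. -/
def RL : Subgroup (V ≃ₗ[ℂ] V) := Subgroup.closure (ReflAutos {r | IsRoot r})

/-- Two roots are adjacent when `|⟨a,b⟩| = √3`, i.e. when their `ω`-reflections braid. -/
def Adj (a b : V) : Prop := ‖herm a b‖ = Real.sqrt 3

/-- A set of roots is connected if the graph given by adjacency on it is connected. -/
def ConnectedSet (Φ : Set V) : Prop :=
  ∀ a ∈ Φ, ∀ b ∈ Φ, Relation.ReflTransGen (fun x y => x ∈ Φ ∧ y ∈ Φ ∧ Adj x y) a b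

/-- `Rad Φ` is the radical of a set `Φ` of roots: the closure of `Φ` under reflecting
members of the set in each other (and identification of unit multiples). -/
inductive Rad (Φ : Set V) : V → Prop
  | base {r : V} : r ∈ Φ → Rad Φ r
  | refl {a b : V} : Rad Φ a → Rad Φ b → Rad Φ (reflMap ω a b)
  | inv {a b : V} : Rad Φ a → Rad Φ b → Rad Φ (reflMap (conj ω) a b)
  | unit {u : ℂ} {r : V} : EisUnit u → Rad Φ r → Rad Φ (u • r)

/-- Shorthand for the entry `-θω²` occurring in the coordinates of the 26 roots. -/
def qc : ℂ := -(θ * ω ^ 2)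

/- The 26 roots of the diagram `D` in the coordinate system `3E₈ ⊕ H`. -/

def rA : V := ![0, 0, 0, 0, 0, 0, 0, 0, 0, 0, 0, 0, 1, ω ^ 2]
def rC1 : V := ![qc, 0, 0, 0, 0, 0, 0, 0, 0, 0, 0, 0, 0, 0]
def rC2 : V := ![0, 0, 0, 0, qc, 0, 0, 0, 0, 0, 0, 0, 0, 0]
def rC3 : V := ![0, 0, 0, 0, 0, 0, 0, 0, qc, 0, 0, 0, 0, 0]
def rE1 : V := ![0, qc, 0, 0, 0, 0, 0, 0, 0, 0, 0, 0, 0, 0]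
def rE2 : V := ![0, 0, 0, 0, 0, qc, 0, 0, 0, 0, 0, 0, 0, 0]
def rE3 : V := ![0, 0, 0, 0, 0, 0, 0, 0, 0, qc, 0, 0, 0, 0]
def rA1 : V := ![0, 0, 0, 0, 0, 0, 0, qc, 0, 0, 0, qc, ω, ω ^ 2]
def rA2 : V := ![0, 0, 0, qc, 0, 0, 0, 0, 0, 0, 0, qc, ω, ω ^ 2]
def rA3 : V := ![0, 0, 0, qc, 0, 0, 0, qc, 0, 0, 0, 0, ω, ω ^ 2]
def rG1 : V := ![0, 0, 0, qc, 0, 0, -qc, qc, 0, 0, -qc, qc, 2 * ω, 2 * ω ^ 2]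
def rG2 : V := ![0, 0, -qc, qc, 0, 0, 0, qc, 0, 0, -qc, qc, 2 * ω, 2 * ω ^ 2]
def rG3 : V := ![0, 0, -qc, qc, 0, 0, -qc, qc, 0, 0, 0, qc, 2 * ω, 2 * ω ^ 2]
def rF : V := ![0, 1, 1, -2, 0, 1, 1, -2, 0, 1, 1, -2, -2 + ω, -θ]
def rB1 : V := ![1, 0, 1, -1, 0, 0, 0, 0, 0, 0, 0, 0, -1, 0]
def rB2 : V := ![0, 0, 0, 0, 1, 0, 1, -1, 0, 0, 0, 0, -1, 0]
def rB3 : V := ![0, 0, 0, 0, 0, 0, 0, 0, 1, 0, 1, -1, -1, 0]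
def rD1 : V := ![1, 1, -1, 0, 0, 0, 0, 0, 0, 0, 0, 0, 0, 0]
def rD2 : V := ![0, 0, 0, 0, 1, 1, -1, 0, 0, 0, 0, 0, 0, 0]
def rD3 : V := ![0, 0, 0, 0, 0, 0, 0, 0, 1, 1, -1, 0, 0, 0]
def rF1 : V := ![0, 1, 1, 1, 0, 0, 0, 0, 0, 0, 0, 0, 0, 0]
def rF2 : V := ![0, 0, 0, 0, 0, 1, 1, 1, 0, 0, 0, 0, 0, 0]
def rF3 : V := ![0, 0, 0, 0, 0, 0, 0, 0, 0, 1, 1, 1, 0, 0]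
def rZ1 : V := ![0, 1, 1, -2, 1, 0, 1, -1, 1, 0, 1, -1, qc, -θ]
def rZ2 : V := ![1, 0, 1, -1, 0, 1, 1, -2, 1, 0, 1, -1, qc, -θ]
def rZ3 : V := ![1, 0, 1, -1, 1, 0, 1, -1, 0, 1, 1, -2, qc, -θ]

/-- The 13 roots of `D` labelled by the points of `P²(𝔽₃)`. -/
def pt : Fin 13 → V :=
  ![rA, rC1, rC2, rC3, rE1, rE2, rE3, rA1, rA2, rA3, rG1, rG2, rG3]

/-- The 13 roots of `D` labelled by the lines of `P²(𝔽₃)`. -/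
def lnr : Fin 13 → V :=
  ![rF, rB1, rB2, rB3, rD1, rD2, rD3, rF1, rF2, rF3, rZ1, rZ2, rZ3]

/-- The 26 roots of the diagram `D` (the incidence graph of `P²(𝔽₃)`). -/
def D26 : Set V := Set.range pt ∪ Set.range lnr

/-- The 16 roots forming the `M₆₆₆` diagram. -/
def M16 : Set V :=
  Set.range
    (![rA, rB1, rB2, rB3, rC1, rC2, rC3, rD1, rD2, rD3, rE1, rE2, rE3, rF1, rF2, rF3] :
      Fin 16 → V)

/-- The 26 vectors `(ρ₁,…,ρ₂₆) = (x₁,…,x₁₃, ξl₁,…,ξl₁₃)`. -/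
def ρv : Fin 26 → V := fun i =>
  if h : (i : ℕ) < 13 then pt ⟨(i : ℕ), h⟩
  else ξ • lnr ⟨(i : ℕ) - 13, by have := i.isLt; omega⟩

/-- The Weyl vector `ρ̄ = (Σ points + ξ Σ lines)/26`. -/
def ρbar : V := (26 : ℂ)⁻¹ • ((∑ i : Fin 13, pt i) + ξ • ∑ i : Fin 13, lnr i)

/-- The height of a root: `ht(r) = |⟨ρ̄, r⟩| / |ρ̄|²`. -/
def ht (r : V) : ℝ := ‖herm ρbar r‖ / ‖herm ρbar ρbar‖

/-! ### Basic facts about `ω`, `θ`, `ξ` and Eisenstein integers -/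

lemma sqrt3_sq : Real.sqrt 3 * Real.sqrt 3 = 3 := Real.mul_self_sqrt (by norm_num)

lemma ω_re : ω.re = -1 / 2 := by
  have : (2 * (Real.pi : ℂ) * Complex.I / 3) = ((2 * Real.pi / 3 : ℝ) : ℂ) * Complex.I := by
    push_cast; ring
  rw [ω, this, Complex.exp_ofReal_mul_I_re]
  have : 2 * Real.pi / 3 = Real.pi - Real.pi / 3 := by ring
  rw [this, Real.cos_pi_sub, Real.cos_pi_div_three]; norm_num

lemma ω_im : ω.im = Real.sqrt 3 / 2 := by
  have : (2 * (Real.pi : ℂ) * Complex.I / 3) = ((2 * Real.pi / 3 : ℝ) : ℂ) * Complex.I := by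
    push_cast; ring
  rw [ω, this, Complex.exp_ofReal_mul_I_im]
  have : 2 * Real.pi / 3 = Real.pi - Real.pi / 3 := by ring
  rw [this, Real.sin_pi_sub, Real.sin_pi_div_three]

lemma ξ_re : ξ.re = Real.sqrt 3 / 2 := by
  have : (-((Real.pi : ℂ) * Complex.I) / 6) = ((-(Real.pi / 6) : ℝ) : ℂ) * Complex.I := by
    push_cast; ring
  rw [ξ, this, Complex.exp_ofReal_mul_I_re, Real.cos_neg, Real.cos_pi_div_six]

lemma ξ_im : ξ.im = -1 / 2 := by
  have : (-((Real.pi : ℂ) * Complex.I) / 6) = ((-(Real.pi / 6) : ℝ) : ℂ) * Complex.I := by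
    push_cast; ring
  rw [ξ, this, Complex.exp_ofReal_mul_I_im, Real.sin_neg, Real.sin_pi_div_six]; norm_num

lemma ω_sq : ω ^ 2 = -1 - ω := by
  have h := sqrt3_sq
  apply Complex.ext <;> simp [pow_two, ω_re, ω_im] <;> nlinarith

lemma conj_ω : conj ω = -1 - ω := by
  apply Complex.ext <;> simp [ω_re, ω_im]; norm_num

lemma θ_eq : θ = 1 + 2 * ω := by rw [θ, conj_ω]; ring

lemma θ_sq : θ ^ 2 = -3 := by rw [θ_eq]; linear_combination 4 * ω_sq

lemma θ_ne : θ ≠ 0 := by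
  intro h; have := θ_sq; rw [h] at this; norm_num at this

lemma conj_θ : conj θ = -θ := by
  simp [θ]

lemma sqrt3_ξ : (Real.sqrt 3 : ℂ) * ξ = 1 - ω := by
  have h := sqrt3_sq
  apply Complex.ext <;> simp [ω_re, ω_im, ξ_re, ξ_im] <;> nlinarith

lemma sqrt3_conj_ξ : (Real.sqrt 3 : ℂ) * conj ξ = 2 + ω := by
  have h := congrArg conj sqrt3_ξ
  simp [conj_ω] at h
  rw [h]; ring

lemma sqrt3C_sq : (Real.sqrt 3 : ℂ) * (Real.sqrt 3 : ℂ) = 3 := by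
  rw [← Complex.ofReal_mul, sqrt3_sq]; norm_num

lemma ξ_conj : ξ * conj ξ = 1 := by
  have h := sqrt3_sq
  rw [Complex.mul_conj, Complex.normSq_apply, ξ_re, ξ_im]
  rw [← Complex.ofReal_one]; congr 1; nlinarith

lemma normSq_eis (a b : ℤ) :
    Complex.normSq ((a : ℂ) + b * ω) = ((a ^ 2 - a * b + b ^ 2 : ℤ) : ℝ) := by
  have h := sqrt3_sq
  simp [Complex.normSq_apply, ω_re, ω_im]
  nlinarith

lemma normSq_θ : Complex.normSq θ = 3 := by
  have := normSq_eis 1 2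
  rw [θ_eq]; push_cast at this; rw [this]

lemma EisP.norm_nat {z : ℂ} (h : EisP z) : ∃ n : ℕ, Complex.normSq z = n := by
  obtain ⟨a, b, rfl⟩ := h
  have h0 : 0 ≤ a ^ 2 - a * b + b ^ 2 := by nlinarith [sq_nonneg (a - b), sq_nonneg a, sq_nonneg b]
  refine ⟨(a ^ 2 - a * b + b ^ 2).toNat, ?_⟩
  rw [normSq_eis]
  exact_mod_cast (Int.toNat_of_nonneg h0).symm

lemma EisP.add {z w : ℂ} (hz : EisP z) (hw : EisP w) : EisP (z + w) := by
  obtain ⟨a, b, rfl⟩ := hz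
  obtain ⟨c, d, rfl⟩ := hw
  exact ⟨a + c, b + d, by push_cast; ring⟩

lemma EisP.neg {z : ℂ} (hz : EisP z) : EisP (-z) := by
  obtain ⟨a, b, rfl⟩ := hz
  exact ⟨-a, -b, by push_cast; ring⟩

lemma EisP.sub {z w : ℂ} (hz : EisP z) (hw : EisP w) : EisP (z - w) := by
  rw [sub_eq_add_neg]; exact hz.add hw.neg

lemma EisP.mul {z w : ℂ} (hz : EisP z) (hw : EisP w) : EisP (z * w) := by
  obtain ⟨a, b, rfl⟩ := hz
  obtain ⟨c, d, rfl⟩ := hw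
  refine ⟨a * c - b * d, a * d + b * c - b * d, ?_⟩
  push_cast
  linear_combination (b * d : ℂ) * ω_sq

lemma EisP.int (a : ℤ) : EisP (a : ℂ) := ⟨a, 0, by simp⟩
lemma EisP.zero : EisP 0 := ⟨0, 0, by simp⟩
lemma EisP.one : EisP 1 := ⟨1, 0, by simp⟩
lemma EisP.two : EisP 2 := ⟨2, 0, by simp⟩
lemma EisP.omega : EisP ω := ⟨0, 1, by simp⟩
lemma EisP.theta : EisP θ := ⟨1, 2, by rw [θ_eq]; push_cast; ring⟩

lemma EisP.sum {ι : Type} (s : Finset ι) (f : ι → ℂ) (h : ∀ i ∈ s, EisP (f i)) :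
    EisP (∑ i ∈ s, f i) :=
  Finset.sum_induction f EisP (fun _ _ => EisP.add) EisP.zero h

/-- An Eisenstein integer of norm one is a unit. -/
lemma eisUnit_of_normSq {z : ℂ} (hz : EisP z) (h : Complex.normSq z = 1) : EisUnit z := by
  obtain ⟨a, b, rfl⟩ := hz
  rw [normSq_eis] at h
  have h1 : a ^ 2 - a * b + b ^ 2 = 1 := by exact_mod_cast h
  have ha : a ≤ 1 := by nlinarith [sq_nonneg (a - 2 * b)]
  have ha' : -1 ≤ a := by nlinarith [sq_nonneg (a - 2 * b)]
  have hb : b ≤ 1 := by nlinarith [sq_nonneg (2 * a - b)]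
  have hb' : -1 ≤ b := by nlinarith [sq_nonneg (2 * a - b)]
  have h2 := ω_sq
  unfold EisUnit
  rw [h2]
  interval_cases a <;> interval_cases b <;> norm_num at h1 <;> push_cast
  · right; right; right; right; left; ring
  · right; left; ring
  · right; right; right; left; ring
  · right; right; left; ring
  · left; ring
  · right; right; right; right; right; ring

lemma EisUnit.eisP {z : ℂ} (h : EisUnit z) : EisP z := by
  have hw := EisP.omega
  rcases h with rfl | rfl | rfl | rfl | rfl | rfl
  · exact EisP.one
  · exact EisP.one.neg
  · exact hw
  · exact hw.neg
  · rw [pow_two]; exact hw.mul hw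
  · rw [pow_two, ]; exact (hw.mul hw).neg

lemma EisUnit.norm {z : ℂ} (h : EisUnit z) : ‖z‖ = 1 := by
  have hw : ‖ω‖ = 1 := by
    have := normSq_eis 0 1
    rw [← Real.sqrt_one, Complex.norm_def]; congr 1
    push_cast at this; rw [show ω = 0 + 1 * ω by ring, this]
  rcases h with rfl | rfl | rfl | rfl | rfl | rfl <;> simp [hw]

/-- Divisibility by `θ` in the Eisenstein integers. -/
def ThDvd (z : ℂ) : Prop := ∃ m : ℂ, EisP m ∧ z = θ * m

lemma ThDvd.norm {z : ℂ} (h : ThDvd z) : ∃ n : ℕ, Complex.normSq z = (3 * n : ℕ) := by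
  obtain ⟨m, hm, rfl⟩ := h
  obtain ⟨n, hn⟩ := hm.norm_nat
  exact ⟨n, by rw [Complex.normSq_mul, normSq_θ, hn]; push_cast; ring⟩

/-- An Eisenstein integer of norm three is `θ` times a unit. -/
lemma unit_of_norm_three {z : ℂ} (hz : EisP z) (h : Complex.normSq z = 3) :
    ∃ u, EisUnit u ∧ z = θ * u := by
  obtain ⟨a, b, rfl⟩ := hz
  have h3 := h
  rw [normSq_eis] at h3
  have h1 : a ^ 2 - a * b + b ^ 2 = 3 := by exact_mod_cast h3
  have h4 : (3 : ℤ) ∣ (a + b) := by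
    have : (3 : ℤ) ∣ (a + b) ^ 2 := ⟨1 + a * b, by linarith⟩
    exact Int.Prime.dvd_pow' (by norm_num : Nat.Prime 3) this
  obtain ⟨k, hk⟩ := h4
  have hb : (b : ℂ) = 3 * k - a := by
    have : b = 3 * k - a := by linarith
    rw [this]; push_cast; ring
  have hu : (a : ℂ) + b * ω = θ * (((2 * k - a : ℤ) : ℂ) + ((k - a : ℤ) : ℂ) * ω) := by
    rw [hb, θ_eq]; push_cast
    linear_combination (-2 * (k - a) : ℂ) * ω_sq
  refine ⟨_, eisUnit_of_normSq ⟨2 * k - a, k - a, rfl⟩ ?_, hu⟩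
  rw [hu, Complex.normSq_mul, normSq_θ] at h
  linarith

/-! ### The combinatorial core -/

/-- Incidence numbers of a projective plane of order three. -/
structure Plane (inc : Fin 13 → Fin 13 → ℕ) : Prop where
  zo : ∀ j i, inc j i = 0 ∨ inc j i = 1
  des : ∀ i k, ∑ j, inc j i * inc j k = if i = k then 4 else 1
  row : ∀ j, ∑ i, inc j i = 4
  col : ∀ i, ∑ j, inc j i = 4

/-- Sum of a weight over the four lines through a given point. -/
lemma Plane.pencil {inc : Fin 13 → Fin 13 → ℕ} (h : Plane inc) (N : Fin 13 → ℕ) (k : Fin 13) :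
    ∑ j, inc j k * ∑ i, inc j i * N i = (∑ i, N i) + 3 * N k := by
  have : ∀ j, inc j k * ∑ i, inc j i * N i = ∑ i, (inc j i * inc j k) * N i := by
    intro j; rw [Finset.mul_sum]; apply Finset.sum_congr rfl; intros; ring
  simp_rw [this]
  rw [Finset.sum_comm]
  simp_rw [← Finset.sum_mul, h.des]
  have h2 : ∀ i, (if i = k then 4 else 1) * N i = N i + if i = k then 3 * N i else 0 := by
    intro i; split_ifs <;> ring
  simp_rw [h2, Finset.sum_add_distrib]
  simp

lemma Plane.total {inc : Fin 13 → Fin 13 → ℕ} (h : Plane inc) (N : Fin 13 → ℕ) :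
    ∑ j, ∑ i, inc j i * N i = 4 * ∑ i, N i := by
  rw [Finset.sum_comm]
  simp_rw [← Finset.sum_mul, h.col]
  rw [Finset.mul_sum]

/-- A blocking multiset of size four in the plane of order three is a line. -/
lemma Plane.blocking {inc : Fin 13 → Fin 13 → ℕ} (h : Plane inc) (N : Fin 13 → ℕ)
    (hN : ∑ i, N i = 4) (hb : ∀ j, 1 ≤ ∑ i, inc j i * N i) :
    ∃ j, ∀ i, N i = inc j i := by
  by_cases hc : ∃ j, ∀ i, inc j i ≤ N i
  · obtain ⟨j, hj⟩ := hc
    refine ⟨j, fun i => ?_⟩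
    have h1 : ∑ i, inc j i = ∑ i, N i := by rw [hN, h.row]
    have := (Finset.sum_eq_sum_iff_of_le (fun i _ => hj i)).1 h1 i (Finset.mem_univ i)
    exact this.symm
  · push Not at hc
    exfalso
    have h1 : ∀ j, ∑ i, inc j i * N i = 1 := by
      intro j
      obtain ⟨k, hk⟩ := hc j
      have hjk : inc j k = 1 := by rcases h.zo j k with h0 | h0 <;> omega
      have hNk : N k = 0 := by omega
      have hp := h.pencil N k
      rw [hN, hNk] at hp
      have hle : ∀ j ∈ Finset.univ, inc j k ≤ inc j k * ∑ i, inc j i * N i := by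
        intro j _
        exact Nat.le_mul_of_pos_right _ (hb j)
      have heq : ∑ j, inc j k = ∑ j, inc j k * ∑ i, inc j i * N i := by rw [hp, h.col]
      have := (Finset.sum_eq_sum_iff_of_le hle).1 heq j (Finset.mem_univ j)
      rw [hjk] at this
      omega
    have ht := h.total N
    simp_rw [h1] at ht
    rw [hN] at ht
    simp at ht

lemma core {inc : Fin 13 → Fin 13 → ℕ} (h : Plane inc) (p : Fin 13 → ℂ) (α : ℂ)
    (hp : ∀ i, EisP (p i)) (hα : EisP α)
    (hl : ∀ j, ThDvd (α - ∑ i, (inc j i : ℂ) * p i))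
    (hn : ∑ i, Complex.normSq (p i) = 3 + Complex.normSq α)
    (h3 : Complex.normSq α < 3) :
    (α = 0 ∧ ∃ i, Complex.normSq (p i) = 3 ∧ ∀ k, k ≠ i → p k = 0) ∨
    (Complex.normSq α = 1 ∧ ∃ j, ∀ i, Complex.normSq (p i) = inc j i) := by
  choose N hN using fun i => (hp i).norm_nat
  have hz : ∀ i, N i = 0 → p i = 0 := by
    intro i hi
    apply Complex.normSq_eq_zero.1
    rw [hN, hi]; simp
  obtain ⟨A, hA⟩ := hα.norm_nat
  have hS : ∑ i, N i = 3 + A := by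
    simp_rw [hN, hA] at hn
    exact_mod_cast hn
  have hA3 : A < 3 := by rw [hA] at h3; exact_mod_cast h3
  have hA2 : A ≠ 2 := by
    rintro rfl
    obtain ⟨a, b, rfl⟩ := hα
    rw [normSq_eis] at hA
    have h1 : a ^ 2 - a * b + b ^ 2 = 2 := by exact_mod_cast hA
    have ha : a ≤ 1 := by nlinarith [sq_nonneg (a - 2 * b)]
    have ha' : -1 ≤ a := by nlinarith [sq_nonneg (a - 2 * b)]
    have hb : b ≤ 1 := by nlinarith [sq_nonneg (2 * a - b)]
    have hb' : -1 ≤ b := by nlinarith [sq_nonneg (2 * a - b)]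
    interval_cases a <;> interval_cases b <;> norm_num at h1
  have hA01 : A = 0 ∨ A = 1 := by omega
  rcases hA01 with rfl | rfl
  · left
    have hα0 : α = 0 := by
      apply Complex.normSq_eq_zero.1
      rw [hA]; simp
    refine ⟨hα0, ?_⟩
    have hdiv : ∀ i, 3 ∣ N i := by
      intro k
      by_contra hk
      have hk1 : 1 ≤ N k := by
        rcases Nat.eq_zero_or_pos (N k) with h0 | h0
        · rw [h0] at hk; simp at hk
        · exact h0
      have hline : ∀ j, inc j k * (N k + 1) ≤ inc j k * ∑ i, inc j i * N i := by
        intro j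
        rcases h.zo j k with h0 | h0
        · simp [h0]
        · apply Nat.mul_le_mul_left
          by_contra hlt
          push Not at hlt
          have hsplit := Finset.add_sum_erase Finset.univ (fun i => inc j i * N i)
            (Finset.mem_univ k)
          simp only [h0, one_mul] at hsplit
          have hzero : ∑ i ∈ Finset.univ.erase k, inc j i * N i = 0 := by omega
          rw [Finset.sum_eq_zero_iff] at hzero
          obtain ⟨n, hn'⟩ := (hl j).norm
          have hs : ∑ i, (inc j i : ℂ) * p i = p k := by
            rw [← Finset.add_sum_erase Finset.univ _ (Finset.mem_univ k), h0]
            rw [Finset.sum_eq_zero]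
            · simp
            · intro i hi
              rcases Nat.mul_eq_zero.1 (hzero i hi) with h1 | h1
              · simp [h1]
              · simp [hz i h1]
          rw [hs, hα0, zero_sub, Complex.normSq_neg, hN] at hn'
          exact hk ⟨n, by exact_mod_cast hn'⟩
      have := Finset.sum_le_sum (fun j (_ : j ∈ Finset.univ) => hline j)
      rw [h.pencil, ← Finset.sum_mul, h.col, hS] at this
      omega
    have hex : ∃ i, N i ≠ 0 := by
      by_contra hc
      push Not at hc
      simp [hc] at hS
    obtain ⟨i, hi⟩ := hex
    have hsplit := Finset.add_sum_erase Finset.univ N (Finset.mem_univ i)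
    have h3i : 3 ≤ N i := Nat.le_of_dvd (Nat.pos_of_ne_zero hi) (hdiv i)
    have hrest : ∑ k ∈ Finset.univ.erase i, N k = 0 := by omega
    have hNi : N i = 3 := by omega
    rw [Finset.sum_eq_zero_iff] at hrest
    refine ⟨i, by rw [hN, hNi]; norm_num, fun k hk => hz k (hrest k (by simp [hk]))⟩
  · right
    refine ⟨by rw [hA]; simp, ?_⟩
    obtain ⟨j, hj⟩ := h.blocking N (by omega) (by
      intro j
      by_contra hc
      have h0 : ∑ i, inc j i * N i = 0 := by omega
      rw [Finset.sum_eq_zero_iff] at h0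
      have hs : ∑ i, (inc j i : ℂ) * p i = 0 := by
        apply Finset.sum_eq_zero
        intro i hi
        rcases Nat.mul_eq_zero.1 (h0 i hi) with h1 | h1
        · simp [h1]
        · simp [hz i h1]
      obtain ⟨n, hn'⟩ := (hl j).norm
      rw [hs, sub_zero, hA] at hn'
      have : 1 = 3 * n := by exact_mod_cast hn'
      omega)
    exact ⟨j, fun i => by rw [hN, hj]⟩

/-- In the second case of `core` the height is at least one, with equality only for lines. -/
lemma core_height {inc : Fin 13 → Fin 13 → ℕ} (h : Plane inc) (p : Fin 13 → ℂ) (α : ℂ)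
    (hα : Complex.normSq α = 1) (j : Fin 13) (hj : ∀ i, Complex.normSq (p i) = inc j i)
    (hh : ‖(4 + (Real.sqrt 3 : ℂ)) * α - ∑ i, p i‖ ≤ Real.sqrt 3) :
    ∀ i, p i = (inc j i : ℂ) * α := by
  -- real part of `conj α * p i` is at most `inc j i`
  have hαα : conj α * α = 1 := by
    rw [mul_comm, Complex.mul_conj, hα]; simp
  have hsq : ∀ i, Complex.normSq (p i - (inc j i : ℂ) * α) =
      2 * ((inc j i : ℝ) - (conj α * p i).re) := by
    intro i
    have hi := hj i
    rcases h.zo j i with h0 | h0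
    · rw [h0] at hi ⊢
      have : p i = 0 := Complex.normSq_eq_zero.1 (by simpa using hi)
      simp [this]
    · rw [h0] at hi ⊢
      simp only [Complex.normSq_apply] at hi hα
      simp [Complex.normSq_apply]
      simp at hi
      nlinarith
  have hre : ∀ i, 0 ≤ (inc j i : ℝ) - (conj α * p i).re := by
    intro i
    have := Complex.normSq_nonneg (p i - (inc j i : ℂ) * α)
    rw [hsq i] at this; linarith
  have hsum : ∑ i, ((inc j i : ℝ) - (conj α * p i).re) ≤ 0 := by
    have hn : ‖conj α‖ = 1 := by
      rw [Complex.norm_conj, Complex.norm_def, hα, Real.sqrt_one]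
    have h1 : ‖conj α * ((4 + (Real.sqrt 3 : ℂ)) * α - ∑ i, p i)‖ ≤ Real.sqrt 3 := by
      rw [norm_mul, hn, one_mul]; exact hh
    have h2 := (Complex.re_le_norm _).trans h1
    have h3 : conj α * ((4 + (Real.sqrt 3 : ℂ)) * α - ∑ i, p i) =
        (4 + (Real.sqrt 3 : ℂ)) - ∑ i, conj α * p i := by
      rw [← Finset.mul_sum]
      linear_combination (4 + (Real.sqrt 3 : ℂ)) * hαα
    rw [h3] at h2
    simp only [Complex.sub_re, Complex.add_re, Complex.re_sum, Complex.ofReal_re] at h2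
    have h4 : ((4 : ℂ)).re = 4 := by norm_num
    rw [h4] at h2
    rw [Finset.sum_sub_distrib]
    have h5 : ∑ i, (inc j i : ℝ) = 4 := by exact_mod_cast h.row j
    rw [h5]; linarith
  have hz := (Finset.sum_eq_zero_iff_of_nonneg (fun i _ => hre i)).1
    (le_antisymm hsum (Finset.sum_nonneg fun i _ => hre i))
  intro i
  have := hsq i
  rw [hz i (Finset.mem_univ i), mul_zero, Complex.normSq_eq_zero] at this
  exact sub_eq_zero.1 this

/-- The quantitative bound: a root of height at most one has small `α` or small `β`. -/
lemma small (p : Fin 13 → ℂ) (α : ℂ)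
    (hn : ∑ i, Complex.normSq (p i) = 3 + Complex.normSq α)
    (hh : ‖(4 + (Real.sqrt 3 : ℂ)) * α - ∑ i, p i‖ ≤ Real.sqrt 3) :
    Complex.normSq α < 3 ∨ Complex.normSq (4 * α - ∑ i, p i) < 9 := by
  by_contra hc
  push Not at hc
  obtain ⟨h1, h2⟩ := hc
  have hcs : Complex.normSq (∑ i, p i) ≤ 13 * (3 + Complex.normSq α) := by
    rw [← hn]
    have a1 := sq_sum_le_card_mul_sum_sq (s := (Finset.univ : Finset (Fin 13)))
      (f := fun i => (p i).re)
    have a2 := sq_sum_le_card_mul_sum_sq (s := (Finset.univ : Finset (Fin 13)))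
      (f := fun i => (p i).im)
    simp only [Complex.normSq_apply, Complex.re_sum, Complex.im_sum, Finset.sum_add_distrib]
    simp only [Finset.card_univ, Fintype.card_fin] at a1 a2
    simp only [pow_two] at a1 a2
    push_cast at a1 a2
    linarith
  have hsq : Complex.normSq ((4 + (Real.sqrt 3 : ℂ)) * α - ∑ i, p i) ≤ 3 := by
    rw [Complex.normSq_eq_norm_sq]
    have := sqrt3_sq
    nlinarith [norm_nonneg ((4 + (Real.sqrt 3 : ℂ)) * α - ∑ i, p i), Real.sqrt_nonneg 3]
  generalize hS : ∑ i, p i = S at *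
  have hs3 := sqrt3_sq
  have hs0 := Real.sqrt_nonneg 3
  have hs1 : Real.sqrt 3 < 1.8 := by nlinarith
  have hs2 : 1.7 < Real.sqrt 3 := by nlinarith
  -- `β = 4α - S`
  have e1 : Complex.normSq ((4 + (Real.sqrt 3 : ℂ)) * α - S) =
      3 * Complex.normSq α + Complex.normSq (4 * α - S)
        + 2 * Real.sqrt 3 * ((4 * α - S) * conj α).re := by
    simp [Complex.normSq_apply]
    linear_combination (α.re ^ 2 + α.im ^ 2) * hs3
  have e2 : Complex.normSq S = 16 * Complex.normSq α + Complex.normSq (4 * α - S)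
        - 8 * ((4 * α - S) * conj α).re := by
    simp [Complex.normSq_apply]
    ring
  rw [e1] at hsq
  rw [e2] at hcs
  generalize ((4 * α - S) * conj α).re = R at *
  generalize Complex.normSq α = x at *
  generalize Complex.normSq (4 * α - S) = y at *
  -- `3x + y - 8R ≤ 39`, `3x + y + 2√3 R ≤ 3`, `x ≥ 3`, `y ≥ 9`
  nlinarith

/-! ### The explicit configuration -/

/-- Incidence matrix of `D`: rows are lines, columns are points. -/
def incM : Fin 13 → Fin 13 → ℕ := ![
  ![1, 0, 0, 0, 1, 1, 1, 0, 0, 0, 0, 0, 0],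
  ![1, 1, 0, 0, 0, 0, 0, 1, 0, 0, 1, 0, 0],
  ![1, 0, 1, 0, 0, 0, 0, 0, 1, 0, 0, 1, 0],
  ![1, 0, 0, 1, 0, 0, 0, 0, 0, 1, 0, 0, 1],
  ![0, 1, 0, 0, 1, 0, 0, 0, 0, 0, 0, 1, 1],
  ![0, 0, 1, 0, 0, 1, 0, 0, 0, 0, 1, 0, 1],
  ![0, 0, 0, 1, 0, 0, 1, 0, 0, 0, 1, 1, 0],
  ![0, 0, 0, 0, 1, 0, 0, 0, 1, 1, 1, 0, 0],
  ![0, 0, 0, 0, 0, 1, 0, 1, 0, 1, 0, 1, 0],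
  ![0, 0, 0, 0, 0, 0, 1, 1, 1, 0, 0, 0, 1],
  ![0, 0, 1, 1, 1, 0, 0, 1, 0, 0, 0, 0, 0],
  ![0, 1, 0, 1, 0, 1, 0, 0, 1, 0, 0, 0, 0],
  ![0, 1, 1, 0, 0, 0, 1, 0, 0, 1, 0, 0, 0]]

lemma plane_inc : Plane incM := ⟨by decide, by decide, by decide, by decide⟩

lemma plane_inc' : Plane (fun j i => incM i j) := ⟨by decide, by decide, by decide, by decide⟩

/-- Tables of Eisenstein integers `a + b ω`, stored as pairs `(a, b)`. -/
abbrev ZV : Type := Fin 14 → ℤ × ℤ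

/-- The complex number represented by a pair. -/
def ev (z : ℤ × ℤ) : ℂ := (z.1 : ℂ) + (z.2 : ℂ) * ω

/-- Multiplication of Eisenstein integers. -/
def emul (z w : ℤ × ℤ) : ℤ × ℤ :=
  (z.1 * w.1 - z.2 * w.2, z.1 * w.2 + z.2 * w.1 - z.2 * w.2)

/-- Conjugation of Eisenstein integers. -/
def ecj (z : ℤ × ℤ) : ℤ × ℤ := (z.1 - z.2, -z.2)

/-- Coefficients of the linear functional `herm x`. -/
def cov (x : ZV) (l : Fin 14) : ℤ × ℤ :=
  if l = 12 then emul (1, 2) (ecj (x 13))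
  else if l = 13 then -emul (1, 2) (ecj (x 12))
  else -ecj (x l)

/-- The complex vector represented by a table. -/
def vec (x : ZV) : V := fun k => ev (x k)

lemma ev_add (z w : ℤ × ℤ) : ev (z + w) = ev z + ev w := by simp [ev]; ring
lemma ev_neg (z : ℤ × ℤ) : ev (-z) = -ev z := by simp [ev]; ring
lemma ev_zero : ev 0 = 0 := by simp [ev]
lemma ev_mul (z w : ℤ × ℤ) : ev (emul z w) = ev z * ev w := by
  simp only [ev, emul]; push_cast
  linear_combination -(z.2 * w.2 : ℂ) * ω_sq
lemma ev_cj (z : ℤ × ℤ) : ev (ecj z) = conj (ev z) := by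
  simp [ev, ecj, conj_ω]; ring
lemma ev_sum {ι : Type} (s : Finset ι) (f : ι → ℤ × ℤ) :
    ev (∑ i ∈ s, f i) = ∑ i ∈ s, ev (f i) := by
  classical
  induction s using Finset.induction_on with
  | empty => simp [ev_zero]
  | insert a s ha ih => rw [Finset.sum_insert ha, Finset.sum_insert ha, ev_add, ih]
lemma ev_eisP (z : ℤ × ℤ) : EisP (ev z) := ⟨z.1, z.2, rfl⟩
lemma ev_theta : ev (1, 2) = θ := by rw [θ_eq]; simp [ev]

/-- The point roots as integer tables. -/
def ptZ : Fin 13 → ZV := ![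
  ![(0, 0), (0, 0), (0, 0), (0, 0), (0, 0), (0, 0), (0, 0), (0, 0), (0, 0), (0, 0), (0, 0), (0, 0), (1, 0), (-1, -1)],
  ![(-1, 1), (0, 0), (0, 0), (0, 0), (0, 0), (0, 0), (0, 0), (0, 0), (0, 0), (0, 0), (0, 0), (0, 0), (0, 0), (0, 0)],
  ![(0, 0), (0, 0), (0, 0), (0, 0), (-1, 1), (0, 0), (0, 0), (0, 0), (0, 0), (0, 0), (0, 0), (0, 0), (0, 0), (0, 0)],
  ![(0, 0), (0, 0), (0, 0), (0, 0), (0, 0), (0, 0), (0, 0), (0, 0), (-1, 1), (0, 0), (0, 0), (0, 0), (0, 0), (0, 0)],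
  ![(0, 0), (-1, 1), (0, 0), (0, 0), (0, 0), (0, 0), (0, 0), (0, 0), (0, 0), (0, 0), (0, 0), (0, 0), (0, 0), (0, 0)],
  ![(0, 0), (0, 0), (0, 0), (0, 0), (0, 0), (-1, 1), (0, 0), (0, 0), (0, 0), (0, 0), (0, 0), (0, 0), (0, 0), (0, 0)],
  ![(0, 0), (0, 0), (0, 0), (0, 0), (0, 0), (0, 0), (0, 0), (0, 0), (0, 0), (-1, 1), (0, 0), (0, 0), (0, 0), (0, 0)],
  ![(0, 0), (0, 0), (0, 0), (0, 0), (0, 0), (0, 0), (0, 0), (-1, 1), (0, 0), (0, 0), (0, 0), (-1, 1), (0, 1), (-1, -1)],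
  ![(0, 0), (0, 0), (0, 0), (-1, 1), (0, 0), (0, 0), (0, 0), (0, 0), (0, 0), (0, 0), (0, 0), (-1, 1), (0, 1), (-1, -1)],
  ![(0, 0), (0, 0), (0, 0), (-1, 1), (0, 0), (0, 0), (0, 0), (-1, 1), (0, 0), (0, 0), (0, 0), (0, 0), (0, 1), (-1, -1)],
  ![(0, 0), (0, 0), (0, 0), (-1, 1), (0, 0), (0, 0), (1, -1), (-1, 1), (0, 0), (0, 0), (1, -1), (-1, 1), (0, 2), (-2, -2)],
  ![(0, 0), (0, 0), (1, -1), (-1, 1), (0, 0), (0, 0), (0, 0), (-1, 1), (0, 0), (0, 0), (1, -1), (-1, 1), (0, 2), (-2, -2)],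
  ![(0, 0), (0, 0), (1, -1), (-1, 1), (0, 0), (0, 0), (1, -1), (-1, 1), (0, 0), (0, 0), (0, 0), (-1, 1), (0, 2), (-2, -2)]]

/-- The line roots as integer tables. -/
def lnZ : Fin 13 → ZV := ![
  ![(0, 0), (1, 0), (1, 0), (-2, 0), (0, 0), (1, 0), (1, 0), (-2, 0), (0, 0), (1, 0), (1, 0), (-2, 0), (-2, 1), (-1, -2)],
  ![(1, 0), (0, 0), (1, 0), (-1, 0), (0, 0), (0, 0), (0, 0), (0, 0), (0, 0), (0, 0), (0, 0), (0, 0), (-1, 0), (0, 0)],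
  ![(0, 0), (0, 0), (0, 0), (0, 0), (1, 0), (0, 0), (1, 0), (-1, 0), (0, 0), (0, 0), (0, 0), (0, 0), (-1, 0), (0, 0)],
  ![(0, 0), (0, 0), (0, 0), (0, 0), (0, 0), (0, 0), (0, 0), (0, 0), (1, 0), (0, 0), (1, 0), (-1, 0), (-1, 0), (0, 0)],
  ![(1, 0), (1, 0), (-1, 0), (0, 0), (0, 0), (0, 0), (0, 0), (0, 0), (0, 0), (0, 0), (0, 0), (0, 0), (0, 0), (0, 0)],
  ![(0, 0), (0, 0), (0, 0), (0, 0), (1, 0), (1, 0), (-1, 0), (0, 0), (0, 0), (0, 0), (0, 0), (0, 0), (0, 0), (0, 0)],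
  ![(0, 0), (0, 0), (0, 0), (0, 0), (0, 0), (0, 0), (0, 0), (0, 0), (1, 0), (1, 0), (-1, 0), (0, 0), (0, 0), (0, 0)],
  ![(0, 0), (1, 0), (1, 0), (1, 0), (0, 0), (0, 0), (0, 0), (0, 0), (0, 0), (0, 0), (0, 0), (0, 0), (0, 0), (0, 0)],
  ![(0, 0), (0, 0), (0, 0), (0, 0), (0, 0), (1, 0), (1, 0), (1, 0), (0, 0), (0, 0), (0, 0), (0, 0), (0, 0), (0, 0)],
  ![(0, 0), (0, 0), (0, 0), (0, 0), (0, 0), (0, 0), (0, 0), (0, 0), (0, 0), (1, 0), (1, 0), (1, 0), (0, 0), (0, 0)],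
  ![(0, 0), (1, 0), (1, 0), (-2, 0), (1, 0), (0, 0), (1, 0), (-1, 0), (1, 0), (0, 0), (1, 0), (-1, 0), (-1, 1), (-1, -2)],
  ![(1, 0), (0, 0), (1, 0), (-1, 0), (0, 0), (1, 0), (1, 0), (-2, 0), (1, 0), (0, 0), (1, 0), (-1, 0), (-1, 1), (-1, -2)],
  ![(1, 0), (0, 0), (1, 0), (-1, 0), (1, 0), (0, 0), (1, 0), (-1, 0), (0, 0), (1, 0), (1, 0), (-2, 0), (-1, 1), (-1, -2)]]

/-- The norm `3` vector orthogonal to all point roots. -/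
def wPZ : ZV := ![(0, 0), (0, 0), (1, -1), (-2, 2), (0, 0), (0, 0), (1, -1), (-2, 2),
  (0, 0), (0, 0), (1, -1), (-2, 2), (0, 4), (-4, -4)]

/-- The norm `3` vector orthogonal to all line roots. -/
def wLZ : ZV := ![(1, 0), (1, 0), (2, 0), (-3, 0), (1, 0), (1, 0), (2, 0), (-3, 0),
  (1, 0), (1, 0), (2, 0), (-3, 0), (-3, 2), (-2, -4)]

lemma qc_eq : qc = -1 + ω := by
  rw [qc, θ_eq, ω_sq]; linear_combination 2 * ω_sq

lemma herm_eval (u v : V) : herm u v =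
    -(conj (u 0) * v 0 + conj (u 1) * v 1 + conj (u 2) * v 2 + conj (u 3) * v 3
      + conj (u 4) * v 4 + conj (u 5) * v 5 + conj (u 6) * v 6 + conj (u 7) * v 7
      + conj (u 8) * v 8 + conj (u 9) * v 9 + conj (u 10) * v 10 + conj (u 11) * v 11)
    - conj (u 12) * θ * v 13 + conj (u 13) * θ * v 12 := by
  unfold herm
  rw [conj_θ]
  simp only [Fin.sum_univ_succ, Fin.sum_univ_zero]
  have e : ∀ (i : Fin 12) (k : Fin 14) (_ : (i : ℕ) = k) (h : 12 ≤ 14), Fin.castLE h i = k := by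
    intro i k hik h; exact Fin.ext hik
  rw [e 0 0 rfl, e (Fin.succ 0) 1 rfl, e (Fin.succ (Fin.succ 0)) 2 rfl]
  rw [e _ 3 rfl, e _ 4 rfl, e _ 5 rfl, e _ 6 rfl, e _ 7 rfl, e _ 8 rfl, e _ 9 rfl, e _ 10 rfl,
    e _ 11 rfl]
  ring

lemma herm_vec (x : ZV) (r : V) : herm (vec x) r = ∑ l, ev (cov x l) * r l := by
  have e : ∀ l : Fin 14, l ≠ 12 → l ≠ 13 → ev (cov x l) = - conj (vec x l) := by
    intro l h1 h2
    rw [cov, if_neg h1, if_neg h2, ev_neg, ev_cj, vec]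
  have e12 : ev (cov x 12) = θ * conj (vec x 13) := by
    rw [cov, if_pos rfl, ev_mul, ev_cj, ev_theta, vec]
  have e13 : ev (cov x 13) = - (θ * conj (vec x 12)) := by
    rw [cov, if_neg (by decide), if_pos rfl, ev_neg, ev_mul, ev_cj, ev_theta, vec]
  rw [herm_eval]
  have hs : ∀ f : Fin 14 → ℂ, ∑ l, f l = f 0 + f 1 + f 2 + f 3 + f 4 + f 5 + f 6 + f 7 + f 8
      + f 9 + f 10 + f 11 + f 12 + f 13 := by
    intro f
    simp only [Fin.sum_univ_castSucc, Fin.sum_univ_zero, zero_add]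
    rfl
  rw [hs, e12, e13, e 0 (by decide) (by decide), e 1 (by decide) (by decide),
    e 2 (by decide) (by decide), e 3 (by decide) (by decide), e 4 (by decide) (by decide),
    e 5 (by decide) (by decide), e 6 (by decide) (by decide), e 7 (by decide) (by decide),
    e 8 (by decide) (by decide), e 9 (by decide) (by decide), e 10 (by decide) (by decide),
    e 11 (by decide) (by decide)]
  ring

set_option maxHeartbeats 2000000 in
lemma pt_eq (i : Fin 13) : pt i = vec (ptZ i) := by
  have h := ω_sq
  fin_cases i <;> ext k <;> fin_cases k <;>
    simp [vec, ev, pt, ptZ, rA, rC1, rC2, rC3, rE1, rE2, rE3, rA1, rA2, rA3,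
      rG1, rG2, rG3, qc_eq, h] <;> ring

set_option maxHeartbeats 2000000 in
lemma ln_eq (i : Fin 13) : lnr i = vec (lnZ i) := by
  fin_cases i <;> ext k <;> fin_cases k <;>
    simp [vec, ev, lnr, lnZ, rF, rB1, rB2, rB3, rD1, rD2, rD3, rF1, rF2, rF3, rZ1, rZ2, rZ3,
      qc_eq, θ_eq] <;> ring

lemma wP_tab : ∀ j k, wPZ k = emul (1, -1) (lnZ j k) + ∑ i, incM j i • ptZ i k := by
  decide +kernel

lemma wL_tab : ∀ i k, wLZ k = emul (2, 1) (ptZ i k) + ∑ j, incM j i • lnZ j k := by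
  decide +kernel

lemma recP_tab : ∀ k l, ∑ i, emul (ptZ i k) (cov (ptZ i) l) =
    emul (wPZ k) (cov wPZ l) + if k = l then (-3, 0) else 0 := by
  decide +kernel

lemma recL_tab : ∀ k l, ∑ i, emul (lnZ i k) (cov (lnZ i) l) =
    emul (wLZ k) (cov wLZ l) + if k = l then (-3, 0) else 0 := by
  decide +kernel

/-- Inner products of tables. -/
def gram (x y : ZV) : ℤ × ℤ := ∑ l, emul (cov x l) (y l)

lemma gramPP : ∀ i k, gram (ptZ i) (ptZ k) = if i = k then (-3, 0) else 0 := by decide +kernel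
lemma gramLL : ∀ i k, gram (lnZ i) (lnZ k) = if i = k then (-3, 0) else 0 := by decide +kernel
lemma gramPL : ∀ i j, gram (ptZ i) (lnZ j) = incM j i • (2, 1) := by decide +kernel
lemma gramLP : ∀ j i, gram (lnZ j) (ptZ i) = incM j i • (1, -1) := by decide +kernel

/-- Divisibility by `θ` on pairs. -/
def zdvd (z : ℤ × ℤ) : Bool := (z.1 + z.2) % 3 = 0

/-- The checks ensuring that `herm x` is divisible by `θ` on the lattice. -/
def good (x : ZV) : Prop :=
  (∀ k : Fin 3, zdvd (∑ i : Fin 4, tet1 i • cov x ⟨4 * (k : ℕ) + (i : ℕ), by omega⟩) = true ∧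
    zdvd (∑ i : Fin 4, tet2 i • cov x ⟨4 * (k : ℕ) + (i : ℕ), by omega⟩) = true) ∧
  zdvd (cov x 12) = true ∧ zdvd (cov x 13) = true

lemma goodP : ∀ i, good (ptZ i) := by unfold good; decide +kernel
lemma goodL : ∀ i, good (lnZ i) := by unfold good; decide +kernel

/-! ### Consequences for the lattice -/

lemma zdvd_ev {z : ℤ × ℤ} (h : zdvd z = true) : ThDvd (ev z) := by
  obtain ⟨a, b⟩ := z
  simp only [zdvd, decide_eq_true_eq] at h
  obtain ⟨k, hk⟩ := Int.dvd_of_emod_eq_zero h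
  refine ⟨_, ⟨2 * k - a, k - a, rfl⟩, ?_⟩
  have hb : (b : ℂ) = 3 * k - a := by
    have : b = 3 * k - a := by linarith
    rw [this]; push_cast; ring
  simp only [ev]
  rw [hb, θ_eq]; push_cast
  linear_combination (-2 * (k - a) : ℂ) * ω_sq

lemma ThDvd.add {z w : ℂ} (hz : ThDvd z) (hw : ThDvd w) : ThDvd (z + w) := by
  obtain ⟨a, ha, rfl⟩ := hz
  obtain ⟨b, hb, rfl⟩ := hw
  exact ⟨a + b, ha.add hb, by ring⟩

lemma ThDvd.mul {z w : ℂ} (hz : ThDvd z) (hw : EisP w) : ThDvd (z * w) := by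
  obtain ⟨a, ha, rfl⟩ := hz
  exact ⟨a * w, ha.mul hw, by ring⟩

lemma ThDvd.zero : ThDvd 0 := ⟨0, EisP.zero, by simp⟩

lemma ThDvd.sum {ι : Type} (s : Finset ι) (f : ι → ℂ) (h : ∀ i ∈ s, ThDvd (f i)) :
    ThDvd (∑ i ∈ s, f i) :=
  Finset.sum_induction f ThDvd (fun _ _ => ThDvd.add) ThDvd.zero h

lemma ThDvd.eisP {z : ℂ} (hz : ThDvd z) : EisP z := by
  obtain ⟨a, ha, rfl⟩ := hz
  exact EisP.theta.mul ha

lemma ev_zsmul (n : ℤ) (z : ℤ × ℤ) : ev (n • z) = n * ev z := by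
  simp [ev]; ring

lemma ev_nsmul (n : ℕ) (z : ℤ × ℤ) : ev (n • z) = n * ev z := by
  simp [ev]; ring

lemma sum_blocks (f : Fin 14 → ℂ) : ∑ l, f l =
    (∑ k : Fin 3, ∑ i : Fin 4, f ⟨4 * (k : ℕ) + (i : ℕ), by omega⟩) + f 12 + f 13 := by
  simp only [Fin.sum_univ_succ, Fin.sum_univ_zero, Fin.val_zero, Fin.val_succ]
  have h12 : f 12 = f ⟨12, by norm_num⟩ := rfl
  have h13 : f 13 = f ⟨13, by norm_num⟩ := rfl
  rw [h12, h13]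
  norm_num [Fin.succ]
  ring

lemma block_dvd (c : Fin 4 → ℤ × ℤ) (w : Fin 4 → ℂ) (hw : inE8 w)
    (h1 : zdvd (∑ i, tet1 i • c i) = true) (h2 : zdvd (∑ i, tet2 i • c i) = true) :
    ThDvd (∑ i, ev (c i) * w i) := by
  obtain ⟨_, s, t, h⟩ := hw
  choose a b hab using h
  have e : ∑ i, ev (c i) * w i = ev (∑ i, tet1 i • c i) * s + ev (∑ i, tet2 i • c i) * t
      + θ * ∑ i, ev (c i) * ((a i : ℂ) + b i * ω) := by
    rw [ev_sum, ev_sum, Finset.sum_mul, Finset.sum_mul, Finset.mul_sum, ← Finset.sum_add_distrib,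
      ← Finset.sum_add_distrib]
    apply Finset.sum_congr rfl
    intro i _
    rw [ev_zsmul, ev_zsmul]
    have := hab i
    push_cast at this
    linear_combination ev (c i) * this
  rw [e]
  refine (((zdvd_ev h1).mul (EisP.int s)).add ((zdvd_ev h2).mul (EisP.int t))).add ⟨_, ?_, rfl⟩
  exact EisP.sum _ _ fun i _ => (ev_eisP _).mul ⟨a i, b i, rfl⟩

lemma good_dvd {x : ZV} (hx : good x) {r : V} (hr : r ∈ Lset) : ThDvd (herm (vec x) r) := by
  rw [herm_vec, sum_blocks]
  obtain ⟨hb, h12, h13⟩ := hx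
  obtain ⟨hE, r12, r13⟩ := hr
  refine ((ThDvd.sum _ _ fun k _ => ?_).add ((zdvd_ev h12).mul r12)).add ((zdvd_ev h13).mul r13)
  exact block_dvd (fun i => cov x ⟨4 * (k : ℕ) + (i : ℕ), by omega⟩) _ (hE k) (hb k).1 (hb k).2

/-- `herm u` as a linear map. -/
def hermL (u : V) : V →ₗ[ℂ] ℂ where
  toFun := herm u
  map_add' v w := by simp only [herm_eval, Pi.add_apply]; ring
  map_smul' c v := by simp only [herm_eval, Pi.smul_apply, smul_eq_mul, RingHom.id_apply]; ring

lemma hermL_apply (u v : V) : hermL u v = herm u v := rfl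

lemma herm_conj (u v : V) : conj (herm u v) = herm v u := by
  simp only [herm_eval, map_add, map_sub, map_neg, map_mul, Complex.conj_conj, conj_θ]; ring

lemma herm_smul_left (c : ℂ) (u v : V) : herm (c • u) v = conj c * herm u v := by
  simp only [herm_eval, Pi.smul_apply, smul_eq_mul, map_mul]; ring

lemma herm_add_left (u w v : V) : herm (u + w) v = herm u v + herm w v := by
  simp only [herm_eval, Pi.add_apply, map_add]; ring

lemma herm_sum_left (f : Fin 13 → V) (v : V) : herm (∑ i, f i) v = ∑ i, herm (f i) v := by
  rw [← herm_conj, ← hermL_apply, map_sum, map_sum]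
  simp only [hermL_apply, herm_conj]

/-- Expansion of a vector in an orthogonal frame. -/
lemma expand (x : Fin 13 → ZV) (w : ZV)
    (h : ∀ k l, ∑ i, emul (x i k) (cov (x i) l) =
      emul (w k) (cov w l) + if k = l then (-3, 0) else 0) (r : V) :
    (3 : ℂ) • r = herm (vec w) r • vec w - ∑ i, herm (vec (x i)) r • vec (x i) := by
  ext k
  have h1 : ∀ l, ∑ i, ev (x i k) * ev (cov (x i) l) =
      ev (w k) * ev (cov w l) + if k = l then -3 else 0 := by
    intro l
    have := congrArg ev (h k l)
    rw [ev_sum, ev_add, ev_mul] at this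
    simp_rw [ev_mul] at this
    rw [this]
    split_ifs <;> simp [ev]
  have h2 : ∑ i, herm (vec (x i)) r * vec (x i) k =
      herm (vec w) r * vec w k - 3 * r k := by
    simp_rw [herm_vec, Finset.sum_mul]
    rw [Finset.sum_comm]
    have : ∀ l, ∑ i, ev (cov (x i) l) * r l * vec (x i) k =
        ev (cov w l) * r l * vec w k + if k = l then -3 * r l else 0 := by
      intro l
      have h3 := h1 l
      have : ∑ i, ev (cov (x i) l) * r l * vec (x i) k =
          (∑ i, ev (x i k) * ev (cov (x i) l)) * r l := by
        rw [Finset.sum_mul]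
        apply Finset.sum_congr rfl
        intro i _
        simp only [vec]; ring
      rw [this, h3]
      simp only [vec]
      split_ifs <;> ring
    simp_rw [this, Finset.sum_add_distrib]
    simp
    ring
  simp only [Pi.smul_apply, Pi.sub_apply, Finset.sum_apply, smul_eq_mul]
  rw [h2]; ring

lemma parseval (x : Fin 13 → ZV) (w : ZV)
    (h : ∀ k l, ∑ i, emul (x i k) (cov (x i) l) =
      emul (w k) (cov w l) + if k = l then (-3, 0) else 0) (r : V) (hr : herm r r = -3)
    (p : Fin 13 → ℂ) (α : ℂ) (hp : ∀ i, herm (vec (x i)) r = θ * p i)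
    (hα : herm (vec w) r = θ * α) :
    ∑ i, Complex.normSq (p i) = 3 + Complex.normSq α := by
  have h1 := congrArg (hermL r) (expand x w h r)
  rw [map_smul, map_sub, map_sum] at h1
  simp only [map_smul, hermL_apply, smul_eq_mul] at h1
  have e : ∀ y : V, herm r y = conj (herm y r) := fun y => (herm_conj y r).symm
  rw [hr, e (vec w), hα] at h1
  simp_rw [e (vec _), hp, map_mul, conj_θ] at h1
  have h2 : ∀ z : ℂ, θ * z * (-θ * conj z) = ((3 * Complex.normSq z : ℝ) : ℂ) := by
    intro z
    push_cast
    rw [← Complex.mul_conj]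
    linear_combination -(z * conj z) * θ_sq
  simp_rw [h2] at h1
  have h3 : (3 : ℝ) * -3 = 3 * Complex.normSq α - ∑ i, 3 * Complex.normSq (p i) := by
    exact_mod_cast h1
  rw [← Finset.mul_sum] at h3
  linarith

/-- The conclusion of the combinatorial argument for one of the two orthogonal frames. -/
lemma frame {inc : Fin 13 → Fin 13 → ℕ} (hpl : Plane inc) (x y : Fin 13 → ZV) (w : ZV)
    (h : ∀ k l, ∑ i, emul (x i k) (cov (x i) l) =
      emul (w k) (cov w l) + if k = l then (-3, 0) else 0)
    (e : ℂ) (he1 : ∃ u, EisUnit u ∧ θ * e = 3 * u) (hec : ThDvd (conj e))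
    (hw : ∀ j, vec w = e • vec (y j) + ∑ i, (inc j i : ℂ) • vec (x i))
    (r : V) (hr : herm r r = -3) (p q : Fin 13 → ℂ) (α : ℂ)
    (hp : ∀ i, herm (vec (x i)) r = θ * p i) (hpE : ∀ i, EisP (p i))
    (hq : ∀ i, herm (vec (y i)) r = θ * q i) (hqE : ∀ i, EisP (q i))
    (hα : herm (vec w) r = θ * α) (h3 : Complex.normSq α < 3)
    (hh : ‖(4 + (Real.sqrt 3 : ℂ)) * α - ∑ i, p i‖ ≤ Real.sqrt 3) :
    ∃ u, EisUnit u ∧ ∃ i, r = u • vec (x i) ∨ r = u • vec (y i) := by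
  have hl : ∀ j, α - ∑ i, (inc j i : ℂ) * p i = conj e * q j := by
    intro j
    have h1 : herm (vec w) r = conj e * herm (vec (y j)) r
        + ∑ i, (inc j i : ℂ) * herm (vec (x i)) r := by
      rw [hw j, herm_add_left, herm_smul_left, herm_sum_left]
      simp only [herm_smul_left, map_natCast]
    simp_rw [hα, hq, hp] at h1
    apply mul_left_cancel₀ θ_ne
    rw [mul_sub, h1, Finset.mul_sum]
    have : ∀ i, θ * ((inc j i : ℂ) * p i) = (inc j i : ℂ) * (θ * p i) := fun i => by ring
    simp_rw [this]; ring
  have hαE : EisP α := by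
    have h1 : α = conj e * q 0 + ∑ i, (inc 0 i : ℂ) * p i := by
      linear_combination hl 0
    rw [h1]
    refine (hec.eisP.mul (hqE 0)).add (EisP.sum _ _ fun i _ => EisP.mul ?_ (hpE i))
    exact_mod_cast EisP.int (inc 0 i : ℤ)
  have hexp := expand x w h r
  rcases core hpl p α hpE hαE (fun j => by rw [hl j]; exact hec.mul (hqE j))
    (parseval x w h r hr p α hp hα) h3 with ⟨h0, i, hi, hk⟩ | ⟨h1, j, hj⟩
  · obtain ⟨u, hu, hpu⟩ := unit_of_norm_three (hpE i) hi
    refine ⟨u, hu, i, Or.inl ?_⟩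
    rw [hα, h0, Finset.sum_eq_single i (fun k _ hki => by rw [hp, hk k hki]; simp) (by simp), hp,
      hpu] at hexp
    have h3r : (3 : ℂ) • r = (3 : ℂ) • (u • vec (x i)) := by
      rw [hexp, smul_smul]
      ext k
      simp only [Pi.sub_apply, Pi.smul_apply, smul_eq_mul]
      linear_combination (-u * vec (x i) k) * θ_sq
    exact smul_right_injective V (by norm_num : (3 : ℂ) ≠ 0) h3r
  · have hpj := core_height hpl p α h1 j hj hh
    obtain ⟨u, hu, hue⟩ := he1
    have hαu := eisUnit_of_normSq hαE h1
    refine ⟨α * u, eisUnit_of_normSq (hαE.mul hu.eisP) ?_, j, Or.inr ?_⟩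
    · rw [Complex.normSq_mul, h1, Complex.normSq_eq_norm_sq, hu.norm]; norm_num
    · have h3r : (3 : ℂ) • r = (3 : ℂ) • ((α * u) • vec (y j)) := by
        rw [hexp, hα]
        have : ∑ i, herm (vec (x i)) r • vec (x i) =
            (θ * α) • ∑ i, (inc j i : ℂ) • vec (x i) := by
          rw [Finset.smul_sum]
          apply Finset.sum_congr rfl
          intro i _
          rw [hp, hpj, smul_smul]; congr 1; ring
        rw [this, ← smul_sub]
        have h5 : vec w - ∑ i, (inc j i : ℂ) • vec (x i) = e • vec (y j) := by
          rw [hw j]; abel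
        rw [h5, smul_smul, smul_smul]
        congr 1
        linear_combination α * hue
      exact smul_right_injective V (by norm_num : (3 : ℂ) ≠ 0) h3r

lemma wP_vec (j : Fin 13) :
    vec wPZ = (1 - ω) • vec (lnZ j) + ∑ i, (incM j i : ℂ) • vec (ptZ i) := by
  ext k
  have := congrArg ev (wP_tab j k)
  rw [ev_add, ev_mul, ev_sum] at this
  simp_rw [ev_nsmul] at this
  simp only [vec, Pi.add_apply, Pi.smul_apply, Finset.sum_apply, smul_eq_mul]
  rw [this]
  congr 2
  simp [ev]; ring

lemma wL_vec (i : Fin 13) :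
    vec wLZ = (2 + ω) • vec (ptZ i) + ∑ j, (incM j i : ℂ) • vec (lnZ j) := by
  ext k
  have := congrArg ev (wL_tab i k)
  rw [ev_add, ev_mul, ev_sum] at this
  simp_rw [ev_nsmul] at this
  simp only [vec, Pi.add_apply, Pi.smul_apply, Finset.sum_apply, smul_eq_mul]
  rw [this]
  congr 2
  simp [ev]

lemma herm_gram (x y : ZV) : herm (vec x) (vec y) = ev (gram x y) := by
  rw [herm_vec, gram, ev_sum]
  simp_rw [ev_mul]
  rfl

lemma hPP (i : Fin 13) : ∑ k, herm (vec (ptZ k)) (vec (ptZ i)) = -3 := by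
  simp_rw [herm_gram, gramPP]
  rw [Finset.sum_eq_single i] <;> simp +contextual [ev]

lemma hLL (i : Fin 13) : ∑ k, herm (vec (lnZ k)) (vec (lnZ i)) = -3 := by
  simp_rw [herm_gram, gramLL]
  rw [Finset.sum_eq_single i] <;> simp +contextual [ev]

lemma hPL (j : Fin 13) : ∑ i, herm (vec (ptZ i)) (vec (lnZ j)) = 4 * (2 + ω) := by
  simp_rw [herm_gram, gramPL, ev_nsmul]
  rw [← Finset.sum_mul]
  have : ∑ i, (incM j i : ℂ) = 4 := by exact_mod_cast plane_inc.row j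
  rw [this]; simp [ev]

lemma hLP (i : Fin 13) : ∑ j, herm (vec (lnZ j)) (vec (ptZ i)) = 4 * (1 - ω) := by
  simp_rw [herm_gram, gramLP, ev_nsmul]
  rw [← Finset.sum_mul]
  have : ∑ j, (incM j i : ℂ) = 4 := by exact_mod_cast plane_inc.col i
  rw [this]; simp [ev]; ring

lemma herm_ρ (r : V) : 26 * herm ρbar r =
    (∑ i, herm (vec (ptZ i)) r) + conj ξ * ∑ j, herm (vec (lnZ j)) r := by
  rw [ρbar, herm_smul_left, herm_add_left, herm_smul_left, herm_sum_left, herm_sum_left]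
  simp_rw [pt_eq, ln_eq]
  rw [map_inv₀, Complex.conj_ofNat, ← mul_assoc, mul_inv_cancel₀ (by norm_num), one_mul]

lemma herm_ρ_pt (i : Fin 13) : 26 * herm ρbar (vec (ptZ i)) = 4 * (Real.sqrt 3 : ℂ) - 3 := by
  rw [herm_ρ, hPP, hLP, ← sqrt3_ξ]
  linear_combination (4 * (Real.sqrt 3 : ℂ)) * ξ_conj

lemma herm_ρ_ln (j : Fin 13) :
    26 * herm ρbar (vec (lnZ j)) = conj ξ * (4 * (Real.sqrt 3 : ℂ) - 3) := by
  rw [herm_ρ, hLL, hPL, ← sqrt3_conj_ξ]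
  ring

lemma herm_ρρ : 26 * herm ρbar ρbar = 4 * (Real.sqrt 3 : ℂ) - 3 := by
  have h1 : herm ρbar ρbar = (26 : ℂ)⁻¹ * ((∑ i, herm ρbar (vec (ptZ i)))
      + ξ * ∑ j, herm ρbar (vec (lnZ j))) := by
    have : ρbar = (26 : ℂ)⁻¹ • ((∑ i, vec (ptZ i)) + ξ • ∑ j, vec (lnZ j)) := by
      rw [ρbar]; simp_rw [pt_eq, ln_eq]
    have h2 := congrArg (hermL ρbar) this
    rw [map_smul, map_add, map_smul, map_sum, map_sum] at h2
    simpa only [hermL_apply, smul_eq_mul] using h2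
  have hx : ∀ i, herm ρbar (vec (ptZ i)) = (4 * (Real.sqrt 3 : ℂ) - 3) / 26 := fun i => by
    rw [← herm_ρ_pt i]; ring
  have hy : ∀ i, herm ρbar (vec (lnZ i)) = conj ξ * (4 * (Real.sqrt 3 : ℂ) - 3) / 26 := fun i => by
    rw [← herm_ρ_ln i]; ring
  rw [h1]
  simp_rw [hx, hy]
  simp only [Finset.sum_const, Finset.card_univ, Fintype.card_fin, nsmul_eq_mul]
  push_cast
  linear_combination (4 * (Real.sqrt 3 : ℂ) - 3) / 2 * ξ_conj

lemma sqrt3_gt : 1.7 < Real.sqrt 3 := by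
  have := sqrt3_sq
  have := Real.sqrt_nonneg 3
  nlinarith

lemma norm_const : ‖4 * (Real.sqrt 3 : ℂ) - 3‖ = 4 * Real.sqrt 3 - 3 := by
  have : 4 * (Real.sqrt 3 : ℂ) - 3 = ((4 * Real.sqrt 3 - 3 : ℝ) : ℂ) := by push_cast; ring
  rw [this, Complex.norm_real, Real.norm_of_nonneg]
  have := sqrt3_gt
  linarith

lemma ht_eq (r : V) : ht r = ‖26 * herm ρbar r‖ / (4 * Real.sqrt 3 - 3) := by
  rw [ht, ← norm_const, ← herm_ρρ, norm_mul, norm_mul]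
  rw [mul_div_mul_left]
  norm_num

lemma ht_pos_const : 0 < 4 * Real.sqrt 3 - 3 := by
  have := sqrt3_gt
  linarith

lemma norm_conj_ξ : ‖conj ξ‖ = 1 := by
  rw [Complex.norm_conj, Complex.norm_def]
  have h := ξ_conj
  rw [Complex.mul_conj] at h
  have : Complex.normSq ξ = 1 := by exact_mod_cast h
  rw [this, Real.sqrt_one]

lemma ht_unit {u : ℂ} (hu : EisUnit u) (s : V) : ht (u • s) = ht s := by
  have : herm ρbar (u • s) = u * herm ρbar s := (hermL ρbar).map_smul u s
  rw [ht, ht, this, norm_mul, hu.norm, one_mul]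

lemma ht_pt (i : Fin 13) : ht (vec (ptZ i)) = 1 := by
  rw [ht_eq, herm_ρ_pt, norm_const, div_self ht_pos_const.ne']

lemma ht_ln (i : Fin 13) : ht (vec (lnZ i)) = 1 := by
  rw [ht_eq, herm_ρ_ln, norm_mul, norm_conj_ξ, one_mul, norm_const, div_self ht_pos_const.ne']

lemma main_le {r : V} (hr : IsRoot r) (hle : ht r ≤ 1) :
    ∃ u, EisUnit u ∧ ∃ s ∈ D26, r = u • s := by
  obtain ⟨hL, hn, _⟩ := hr
  choose p hpE hp using fun i => good_dvd (goodP i) hL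
  choose q hqE hq using fun i => good_dvd (goodL i) hL
  set α := herm (vec wPZ) r / θ with hαd
  set β := herm (vec wLZ) r / θ with hβd
  have hα : herm (vec wPZ) r = θ * α := by rw [hαd]; field_simp [θ_ne]
  have hβ : herm (vec wLZ) r = θ * β := by rw [hβd]; field_simp [θ_ne]
  -- linear relations
  have r1 : 13 * α = (2 + ω) * (∑ j, q j) + 4 * ∑ i, p i := by
    have h1 : ∀ j, α = (2 + ω) * q j + ∑ i, (incM j i : ℂ) * p i := by
      intro j
      have h1 : herm (vec wPZ) r = conj (1 - ω) * herm (vec (lnZ j)) r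
          + ∑ i, (incM j i : ℂ) * herm (vec (ptZ i)) r := by
        rw [wP_vec j, herm_add_left, herm_smul_left, herm_sum_left]
        simp only [herm_smul_left, map_natCast]
      simp_rw [hα, hq, hp] at h1
      apply mul_left_cancel₀ θ_ne
      rw [h1, mul_add, Finset.mul_sum]
      have : ∀ i, θ * ((incM j i : ℂ) * p i) = (incM j i : ℂ) * (θ * p i) := fun i => by ring
      simp_rw [this]
      simp [conj_ω]; ring
    have h2 : ∑ _j : Fin 13, α = ∑ j, ((2 + ω) * q j + ∑ i, (incM j i : ℂ) * p i) :=
      Finset.sum_congr rfl fun j _ => h1 j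
    rw [Finset.sum_add_distrib, Finset.sum_comm, ← Finset.mul_sum] at h2
    simp_rw [← Finset.sum_mul] at h2
    have h3 : ∀ i, ∑ j, (incM j i : ℂ) = 4 := fun i => by exact_mod_cast plane_inc.col i
    simp_rw [h3, ← Finset.mul_sum] at h2
    simpa using h2
  have r2 : 13 * β = (1 - ω) * (∑ j, p j) + 4 * ∑ i, q i := by
    have h1 : ∀ j, β = (1 - ω) * p j + ∑ i, (incM i j : ℂ) * q i := by
      intro j
      have h1 : herm (vec wLZ) r = conj (2 + ω) * herm (vec (ptZ j)) r
          + ∑ i, (incM i j : ℂ) * herm (vec (lnZ i)) r := by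
        rw [wL_vec j, herm_add_left, herm_smul_left, herm_sum_left]
        simp only [herm_smul_left, map_natCast]
      simp_rw [hβ, hq, hp] at h1
      apply mul_left_cancel₀ θ_ne
      rw [h1, mul_add, Finset.mul_sum]
      have : ∀ i, θ * ((incM i j : ℂ) * q i) = (incM i j : ℂ) * (θ * q i) := fun i => by ring
      simp_rw [this]
      have h2 : conj (2 + ω) = 1 - ω := by
        rw [map_add, conj_ω, Complex.conj_ofNat]; ring
      rw [h2]; ring
    have h2 : ∑ _j : Fin 13, β = ∑ j, ((1 - ω) * p j + ∑ i, (incM i j : ℂ) * q i) :=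
      Finset.sum_congr rfl fun j _ => h1 j
    rw [Finset.sum_add_distrib, Finset.sum_comm, ← Finset.mul_sum] at h2
    simp_rw [← Finset.sum_mul] at h2
    have h3 : ∀ i, ∑ j, (incM i j : ℂ) = 4 := fun i => by exact_mod_cast plane_inc.row i
    simp_rw [h3, ← Finset.mul_sum] at h2
    simpa using h2
  -- the height in terms of `p` and `q`
  have hs0 : (Real.sqrt 3 : ℂ) ≠ 0 := by
    intro h0
    have := sqrt3C_sq
    rw [h0] at this; norm_num at this
  have hcξ : conj ξ * (Real.sqrt 3 : ℂ) = 2 + ω := by rw [mul_comm]; exact sqrt3_conj_ξ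
  have hρ : 26 * herm ρbar r = θ * ((∑ i, p i) + conj ξ * ∑ j, q j) := by
    rw [herm_ρ]
    simp_rw [hp, hq, ← Finset.mul_sum]; ring
  have hnθ : ‖θ‖ = Real.sqrt 3 := by rw [Complex.norm_def, normSq_θ]
  have hle2 : Real.sqrt 3 * ‖(∑ i, p i) + conj ξ * ∑ j, q j‖ ≤ 4 * Real.sqrt 3 - 3 := by
    rw [ht_eq, div_le_one ht_pos_const, hρ, norm_mul, hnθ] at hle
    exact hle
  have hfac : 4 * Real.sqrt 3 - 3 = Real.sqrt 3 * (4 - Real.sqrt 3) := by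
    linear_combination sqrt3_sq
  have hs3pos : 0 < Real.sqrt 3 := by have := sqrt3_gt; linarith
  have hle3 : ‖(∑ i, p i) + conj ξ * ∑ j, q j‖ ≤ 4 - Real.sqrt 3 := by
    rw [hfac] at hle2
    exact le_of_mul_le_mul_left hle2 hs3pos
  have h4pos : 0 < 4 - Real.sqrt 3 := by nlinarith [sqrt3_sq]
  have hn4 : ‖(4 : ℂ) - (Real.sqrt 3 : ℂ)‖ = 4 - Real.sqrt 3 := by
    have : (4 : ℂ) - (Real.sqrt 3 : ℂ) = ((4 - Real.sqrt 3 : ℝ) : ℂ) := by push_cast; ring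
    rw [this, Complex.norm_real, Real.norm_of_nonneg h4pos.le]
  have hnsq : ‖(Real.sqrt 3 : ℂ)‖ = Real.sqrt 3 := by
    rw [Complex.norm_real, Real.norm_of_nonneg hs3pos.le]
  have hs3C := sqrt3C_sq
  have hP : ‖(4 + (Real.sqrt 3 : ℂ)) * α - ∑ i, p i‖ ≤ Real.sqrt 3 := by
    have e : (4 - (Real.sqrt 3 : ℂ)) * ((4 + (Real.sqrt 3 : ℂ)) * α - ∑ i, p i) =
        (Real.sqrt 3 : ℂ) * ((∑ i, p i) + conj ξ * ∑ j, q j) := by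
      linear_combination r1 - α * hs3C - (∑ j, q j) * hcξ
    have := congrArg norm e
    rw [norm_mul, norm_mul, hn4, hnsq] at this
    nlinarith
  have hQ : ‖(4 + (Real.sqrt 3 : ℂ)) * β - ∑ i, q i‖ ≤ Real.sqrt 3 := by
    have e : (4 - (Real.sqrt 3 : ℂ)) * ((4 + (Real.sqrt 3 : ℂ)) * β - ∑ i, q i) =
        ((Real.sqrt 3 : ℂ) * ξ) * ((∑ i, p i) + conj ξ * ∑ j, q j) := by
      linear_combination r2 - β * hs3C - (∑ j, p j) * sqrt3_ξ
        - (Real.sqrt 3 : ℂ) * (∑ j, q j) * ξ_conj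
    have := congrArg norm e
    have hnξ : ‖ξ‖ = 1 := by rw [← Complex.norm_conj]; exact norm_conj_ξ
    rw [norm_mul, norm_mul, norm_mul, hn4, hnsq, hnξ, mul_one] at this
    nlinarith
  have hnorm := parseval ptZ wPZ recP_tab r hn p α hp hα
  have hfinal : ∃ u, EisUnit u ∧ ∃ i, r = u • vec (ptZ i) ∨ r = u • vec (lnZ i) := by
    rcases small p α hnorm hP with h3 | h9
    · refine frame plane_inc ptZ lnZ wPZ recP_tab (1 - ω)
        ⟨1 + ω, ?_, ?_⟩ ⟨-ω, EisP.omega.neg, ?_⟩ wP_vec r hn p q α hp hpE hq hqE hα h3 hP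
      · right; right; right; right; right
        rw [ω_sq]; ring
      · rw [θ_eq]; linear_combination -2 * ω_sq
      · rw [map_sub, conj_ω, map_one, θ_eq]; linear_combination 2 * ω_sq
    · have hβ3 : Complex.normSq β < 3 := by
        have e : 3 * β = (1 - ω) * (4 * α - ∑ i, p i) := by
          apply mul_left_cancel₀ (by norm_num : (13 : ℂ) ≠ 0)
          linear_combination 3 * r2 - 4 * (1 - ω) * r1 + 4 * (∑ i, q i) * ω_sq
        have e2 := congrArg Complex.normSq e
        rw [Complex.normSq_mul, Complex.normSq_mul] at e2
        have e3 : Complex.normSq (1 - ω) = 3 := by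
          have := normSq_eis 1 (-1)
          push_cast at this
          rw [show (1 : ℂ) - ω = 1 + -1 * ω by ring, this]
        have e4 : Complex.normSq 3 = 9 := by norm_num [Complex.normSq_apply]
        rw [e3, e4] at e2
        linarith
      have k1 : ∃ u, EisUnit u ∧ θ * (2 + ω) = 3 * u :=
        ⟨ω, Or.inr (Or.inr (Or.inl rfl)), by
          rw [θ_eq]; linear_combination 2 * ω_sq⟩
      have k2 : ThDvd (conj (2 + ω)) := ⟨-1 - ω, EisP.one.neg.sub EisP.omega, by
        rw [map_add, conj_ω, Complex.conj_ofNat, θ_eq]; linear_combination 2 * ω_sq⟩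
      obtain ⟨u, hu, i, hi⟩ := frame plane_inc' lnZ ptZ wLZ recL_tab (2 + ω) k1 k2
        wL_vec r hn q p β hq hqE hp hpE hβ hβ3 hQ
      exact ⟨u, hu, i, hi.symm⟩
  obtain ⟨u, hu, i, hi | hi⟩ := hfinal
  · exact ⟨u, hu, pt i, Or.inl ⟨i, rfl⟩, by rw [pt_eq]; exact hi⟩
  · exact ⟨u, hu, lnr i, Or.inr ⟨i, rfl⟩, by rw [ln_eq]; exact hi⟩

lemma ht_D26 {r : V} (h : ∃ u, EisUnit u ∧ ∃ s ∈ D26, r = u • s) : ht r = 1 := by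
  obtain ⟨u, hu, s, hs, rfl⟩ := h
  rw [ht_unit hu]
  rcases hs with ⟨i, rfl⟩ | ⟨i, rfl⟩
  · rw [pt_eq, ht_pt]
  · rw [ln_eq, ht_ln]

/-- Every root of `L` has height at least one, and the roots of height exactly one
are precisely the unit multiples of the 26 roots of the diagram `D`. -/
theorem stmt4 : ∀ r : V, IsRoot r →
    1 ≤ ht r ∧ (ht r = 1 ↔ ∃ u : ℂ, EisUnit u ∧ ∃ s ∈ D26, r = u • s) := by
  intro r hr
  rcases le_or_gt (ht r) 1 with h | h
  · have h1 := main_le hr h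
    have h2 := ht_D26 h1
    exact ⟨h2.ge, fun _ => h1, fun _ => h2⟩
  · exact ⟨h.le, fun h1 => absurd h1 h.ne', fun h1 => ht_D26 h1⟩

end Bimonster
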